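/- Weak gradient mapping domination: suppose f is (C⋆, ε_VGD)-VGD on X, f⋆ := min_{x∈X} f(x) > −∞, each local regularizer R_x is 1-strongly convex with an L-Lipschitz gradient w.r.t. ‖·‖_x, max_{u,v∈X} ‖u − v‖_x ≤ D and ‖∇f(x)‖_x* ≤ M for all x ∈ X, and ĝ is an ε_grad-approximate gradient oracle. Then for every x ∈ X and x⁺ ∈ T_η^{ε_opt}(x; R_x): ‖G_η(x, x⁺; R_x)‖_x* ≥ √(2ω) (f(x) − f⋆ − δ), where ω := ½ (C⋆(D + ηM))^{-2} and δ := ε_VGD + ε_opt C⋆ + ε_grad C⋆ D. -/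

import Mathlib

open scoped BigOperators

noncomputable section

/-- Standard inner product on `ℝ^d`. -/
def dotd {d : ℕ} (u v : Fin d → ℝ) : ℝ := ∑ i, u i * v i

/-- `N` is a norm on `ℝ^d`. -/
def IsNorm {d : ℕ} (N : (Fin d → ℝ) → ℝ) : Prop :=
  (∀ x, 0 ≤ N x) ∧ (∀ x, N x = 0 ↔ x = 0) ∧
    (∀ (c : ℝ) (x : Fin d → ℝ), N (c • x) = |c| * N x) ∧ ∀ x y, N (x + y) ≤ N x + N y

/-- The dual norm of `N`. -/
def dualNorm {d : ℕ} (N : (Fin d → ℝ) → ℝ) (z : Fin d → ℝ) : ℝ :=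
  sSup ((fun u => dotd z u) '' {u | N u ≤ 1})

/-- Bregman divergence of `h` whose gradient is `gh`. -/
def breg {d : ℕ} (h : (Fin d → ℝ) → ℝ) (gh : (Fin d → ℝ) → Fin d → ℝ)
    (u v : Fin d → ℝ) : ℝ :=
  h u - h v - dotd (gh v) (u - v)

/-- Bregman gradient mapping `G_η(x, x⁺; h) = (1/η)(∇h(x) − ∇h(x⁺))`. -/
def Gmap {d : ℕ} (gh : (Fin d → ℝ) → Fin d → ℝ) (η : ℝ) (x xp : Fin d → ℝ) :
    Fin d → ℝ :=
  (1 / η) • (gh x - gh xp)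

/-- The set `T_η^{εopt}(x; h)` of `εopt`-approximate Bregman proximal updates at `x`,
for gradient estimate `g = ĝ(x)`. -/
def proxSet {d : ℕ} (X : Set (Fin d → ℝ)) (g : Fin d → ℝ)
    (gh : (Fin d → ℝ) → Fin d → ℝ) (η εopt : ℝ) (x : Fin d → ℝ) :
    Set (Fin d → ℝ) :=
  {xp | xp ∈ X ∧ ∀ z ∈ X, dotd (g + (1 / η) • (gh xp - gh x)) (z - xp) ≥ -εopt}

theorem aux_bound {E : Type*} [AddCommGroup E] [Module ℝ E] [FiniteDimensional ℝ E]
    (n : E → ℝ) (h0 : ∀ x, 0 ≤ n x) (h1 : ∀ x, n x = 0 ↔ x = 0)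
    (h2 : ∀ (c : ℝ) (x : E), n (c • x) = |c| * n x) (h3 : ∀ x y, n (x + y) ≤ n x + n y)
    (φ : E →ₗ[ℝ] ℝ) : ∃ C, ∀ u, n u ≤ 1 → φ u ≤ C := by
  letI : Norm E := ⟨n⟩
  have core : NormedSpace.Core ℝ E :=
    { norm_nonneg := h0
      norm_smul := h2
      norm_triangle := h3
      norm_eq_zero_iff := h1 }
  letI : NormedAddCommGroup E := NormedAddCommGroup.ofCore core
  letI : NormedSpace ℝ E := NormedSpace.ofCore core
  refine ⟨‖LinearMap.toContinuousLinearMap φ‖, fun u hu => ?_⟩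
  have h := (LinearMap.toContinuousLinearMap φ).le_opNorm u
  have hu' : ‖u‖ ≤ 1 := hu
  have h4 : φ u ≤ ‖LinearMap.toContinuousLinearMap φ u‖ := le_abs_self _
  have h5 := norm_nonneg (LinearMap.toContinuousLinearMap φ)
  nlinarith

theorem dotd_add_r {d : ℕ} (a b c : Fin d → ℝ) : dotd a (b + c) = dotd a b + dotd a c := by
  simp [dotd, mul_add, Finset.sum_add_distrib]

theorem dotd_sub_r {d : ℕ} (a b c : Fin d → ℝ) : dotd a (b - c) = dotd a b - dotd a c := by
  simp [dotd, mul_sub, Finset.sum_sub_distrib]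

theorem dotd_add_l {d : ℕ} (a b c : Fin d → ℝ) : dotd (a + b) c = dotd a c + dotd b c := by
  simp [dotd, add_mul, Finset.sum_add_distrib]

theorem dotd_sub_l {d : ℕ} (a b c : Fin d → ℝ) : dotd (a - b) c = dotd a c - dotd b c := by
  simp [dotd, sub_mul, Finset.sum_sub_distrib]

theorem dotd_smul_r {d : ℕ} (t : ℝ) (a b : Fin d → ℝ) : dotd a (t • b) = t * dotd a b := by
  simp only [dotd, Finset.mul_sum, Pi.smul_apply, smul_eq_mul]
  exact Finset.sum_congr rfl fun i _ => by ring

theorem dotd_smul_l {d : ℕ} (t : ℝ) (a b : Fin d → ℝ) : dotd (t • a) b = t * dotd a b := by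
  simp only [dotd, Finset.mul_sum, Pi.smul_apply, smul_eq_mul]
  exact Finset.sum_congr rfl fun i _ => by ring

theorem dual_bdd {d : ℕ} {N : (Fin d → ℝ) → ℝ} (hN : IsNorm N) (z : Fin d → ℝ) :
    BddAbove ((fun u => dotd z u) '' {u | N u ≤ 1}) := by
  obtain ⟨h0, h1, h2, h3⟩ := hN
  obtain ⟨C, hC⟩ := aux_bound N h0 h1 h2 h3
    { toFun := fun u => dotd z u
      map_add' := dotd_add_r z
      map_smul' := fun t b => dotd_smul_r t z b }
  refine ⟨C, ?_⟩
  rintro _ ⟨u, hu, rfl⟩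
  exact hC u hu

theorem dual_nonneg {d : ℕ} {N : (Fin d → ℝ) → ℝ} (hN : IsNorm N) (z : Fin d → ℝ) :
    0 ≤ dualNorm N z := by
  refine le_csSup (dual_bdd hN z) ⟨0, ?_, by simp [dotd]⟩
  have := (hN.2.1 0).2 rfl
  simp [this]

theorem dual_le {d : ℕ} {N : (Fin d → ℝ) → ℝ} (hN : IsNorm N) (z u : Fin d → ℝ) :
    dotd z u ≤ dualNorm N z * N u := by
  rcases (hN.1 u).eq_or_lt with h | h
  · have hu := (hN.2.1 u).1 h.symm
    subst hu
    rw [← h]; simp [dotd]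
  · have h1 : dotd z ((N u)⁻¹ • u) ≤ dualNorm N z := by
      refine le_csSup (dual_bdd hN z) ⟨_, ?_, rfl⟩
      rw [Set.mem_setOf_eq, hN.2.2.1, abs_of_pos (inv_pos.2 h), inv_mul_cancel₀ h.ne']
    rw [dotd_smul_r, inv_mul_le_iff₀ h] at h1
    linarith

/-- Lemma: weak gradient mapping domination. -/
theorem weak_gradient_mapping_domination (d : ℕ) (X : Set (Fin d → ℝ))
    (f : (Fin d → ℝ) → ℝ) (gradf ghat : (Fin d → ℝ) → Fin d → ℝ)
    (N : (Fin d → ℝ) → (Fin d → ℝ) → ℝ)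
    (R : (Fin d → ℝ) → (Fin d → ℝ) → ℝ)
    (gradR : (Fin d → ℝ) → (Fin d → ℝ) → Fin d → ℝ)
    (Cstar epsVGD L D Mb eta epsgrad epsopt : ℝ)
    (hX : Convex ℝ X) (hne : X.Nonempty) (hbdd : BddBelow (f '' X))
    (hN : ∀ y ∈ X, IsNorm (N y))
    (hC : 0 < Cstar) (hεv : 0 < epsVGD)
    -- (C⋆, ε_VGD)-VGD
    (hVGD : ∀ y ∈ X, f y - sInf (f '' X) ≤
      Cstar * sSup ((fun z => dotd (gradf y) (y - z)) '' X) + epsVGD)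
    -- local regularizers: 1-strong convexity and L-Lipschitz gradient
    (hsc : ∀ y ∈ X, ∀ u v, breg (R y) (gradR y) u v ≥ (1 / 2) * (N y (u - v)) ^ 2)
    (hLip : ∀ y ∈ X, ∀ u v, dualNorm (N y) (gradR y u - gradR y v) ≤ L * N y (u - v))
    -- diameter and gradient bounds
    (hD : ∀ y ∈ X, ∀ u ∈ X, ∀ v ∈ X, N y (u - v) ≤ D)
    (hM : ∀ y ∈ X, dualNorm (N y) (gradf y) ≤ Mb)
    -- approximate gradient oracle
    (hg : ∀ y ∈ X, dualNorm (N y) (ghat y - gradf y) ≤ epsgrad)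
    (heta : 0 < eta) :
    ∀ x ∈ X, ∀ xp ∈ proxSet X (ghat x) (gradR x) eta epsopt x,
      dualNorm (N x) (Gmap (gradR x) eta x xp) ≥
        Real.sqrt (2 * ((1 / 2) * ((Cstar * (D + eta * Mb))⁻¹) ^ 2)) *
          (f x - sInf (f '' X) -
            (epsVGD + epsopt * Cstar + epsgrad * Cstar * D)) := by
  intro x hx xp hxp
  obtain ⟨hxpX, hprox⟩ := hxp
  have hNx := hN x hx
  set G := Gmap (gradR x) eta x xp with hG
  have hG0 := dual_nonneg hNx G
  have hM0 : 0 ≤ Mb := (dual_nonneg hNx _).trans (hM x hx)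
  have hD0 : 0 ≤ D := (hNx.1 _).trans (hD x hx x hx x hx)
  have hsym : ∀ u v, N x (u - v) = N x (v - u) := fun u v => by
    have := hNx.2.2.1 (-1) (v - u)
    simpa using this
  have heG : ∀ w, dotd (gradR x x - gradR x xp) w = eta * dotd G w := fun w => by
    rw [hG, Gmap, dotd_smul_l]; field_simp
  -- step length bound
  have hstep : N x (x - xp) ≤ eta * dualNorm (N x) G := by
    have a := hsc x hx x xp
    have b := hsc x hx xp x
    rw [hsym xp x] at b
    simp only [breg, dotd_sub_r] at a b
    have c := heG (x - xp)
    rw [dotd_sub_l, dotd_sub_r, dotd_sub_r] at c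
    have e := mul_le_mul_of_nonneg_left (dual_le hNx G (x - xp)) heta.le
    have h0 := hNx.1 (x - xp)
    rcases h0.eq_or_lt with h | h
    · rw [← h]; positivity
    · have : N x (x - xp) * N x (x - xp) ≤ (eta * dualNorm (N x) G) * N x (x - xp) := by
        nlinarith
      exact le_of_mul_le_mul_right this h
  have hsup : sSup ((fun z => dotd (gradf x) (x - z)) '' X) ≤
      (D + eta * Mb) * dualNorm (N x) G + epsopt + epsgrad * D := by
    refine csSup_le (hne.image _) ?_
    rintro _ ⟨z, hz, rfl⟩
    have p1 : dotd (gradf x) (x - xp) ≤ Mb * (eta * dualNorm (N x) G) :=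
      (dual_le hNx _ _).trans (mul_le_mul (hM x hx) hstep (hNx.1 _) hM0)
    have p2 : dotd (ghat x - gradf x) (z - xp) ≤ epsgrad * D :=
      (dual_le hNx _ _).trans (mul_le_mul (hg x hx) (hD x hx z hz xp hxpX) (hNx.1 _)
        ((dual_nonneg hNx _).trans (hg x hx)))
    have p3 : dotd G (xp - z) ≤ dualNorm (N x) G * D :=
      (dual_le hNx _ _).trans (mul_le_mul_of_nonneg_left (hD x hx xp hxpX z hz) hG0)
    have p4 := hprox z hz
    have hneg : (1 / eta) • (gradR x xp - gradR x x) = (-1 : ℝ) • G := by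
      rw [hG, Gmap, neg_one_smul, ← smul_neg, neg_sub]
    rw [hneg, dotd_add_l, dotd_smul_l] at p4
    simp only [dotd_sub_l, dotd_sub_r] at p1 p2 p3 p4 ⊢
    nlinarith
  have key : f x - sInf (f '' X) - (epsVGD + epsopt * Cstar + epsgrad * Cstar * D) ≤
      (Cstar * (D + eta * Mb)) * dualNorm (N x) G := by
    have := hVGD x hx
    have := mul_le_mul_of_nonneg_left hsup hC.le
    nlinarith
  have hA : 0 ≤ Cstar * (D + eta * Mb) := by positivity
  have hs : Real.sqrt (2 * ((1 / 2) * ((Cstar * (D + eta * Mb))⁻¹) ^ 2)) =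
      (Cstar * (D + eta * Mb))⁻¹ := by
    rw [← mul_assoc]; norm_num only [one_mul]
    exact Real.sqrt_sq (inv_nonneg.2 hA)
  rw [hs, ge_iff_le]
  rcases hA.eq_or_lt with h | h
  · rw [← h]; simpa using hG0
  · rw [inv_mul_le_iff₀ h]; exact key
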